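/- For every c > 0 there exists c' > 0, depending only on c, such that the following holds for all integers n ≥ 1, d ≥ 1 and every product model 𝒫 = { ∏_{j=1}^d p_{θ_j} : θ_j ∈ Θ_j }: if for each j ∈ [d] there exist θ_{j,+}, θ_{j,−} ∈ Θ_j with 1/(10n) ≤ H²(p_{θ_{j,+}}, p_{θ_{j,−}}) ≤ 1/(5n), then the minimax sample-amplification error satisfies ε*(𝒫, n, ⌈cn/√d⌉) ≥ c'. -/

import Mathlib

open MeasureTheory ProbabilityTheory
open scoped ENNReal NNReal

/-- Total variation distance between two measures: `sup_A |P(A) - Q(A)|`. -/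
noncomputable def tvDist {X : Type*} [MeasurableSpace X] (μ ν : Measure X) : ℝ :=
  ⨆ A : {s : Set X // MeasurableSet s}, |(μ A).toReal - (ν A).toReal|

/-- Minimax sample amplification error `ε*(𝒫, n, m)` for the family `(P θ)_θ`. -/
noncomputable def ampErr {X Θ : Type*} [MeasurableSpace X] (P : Θ → Measure X)
    (n m : ℕ) : ℝ :=
  ⨅ T : {T : Kernel (Fin n → X) (Fin (n + m) → X) // IsMarkovKernel T},
    ⨆ θ : Θ, tvDist (Measure.pi fun _ : Fin (n + m) => P θ)
      ((Measure.pi fun _ : Fin n => P θ).bind T.1)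

/-- The squared Hellinger distance
`H²(P,Q) = (1/2)∫ (√(dP/dν) − √(dQ/dν))² dν`, computed with the dominating measure
`ν = P + Q`. -/
noncomputable def hellingerSq {X : Type*} [MeasurableSpace X] (P Q : Measure X) : ℝ :=
  (1 / 2) * ∫ x, (Real.sqrt ((P.rnDeriv (P + Q) x).toReal) -
      Real.sqrt ((Q.rnDeriv (P + Q) x).toReal)) ^ 2 ∂(P + Q)

/-- The harmonic affinity integrand `uv/(u+v)`, with value `0` at `u = v = 0`. -/
noncomputable def harm (u v : ℝ) : ℝ := u * v / (u + v)

lemma harm_nonneg {u v : ℝ} (hu : 0 ≤ u) (hv : 0 ≤ v) : 0 ≤ harm u v := by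
  unfold harm; positivity

lemma harm_le_left {u v : ℝ} (hu : 0 ≤ u) (hv : 0 ≤ v) : harm u v ≤ u := by
  unfold harm
  rcases (add_nonneg hu hv).eq_or_lt with h | h
  · rw [← h]; simpa using hu
  · rw [div_le_iff₀ h]; nlinarith [mul_nonneg hu hu]

lemma harm_le_action {u v : ℝ} (hu : 0 ≤ u) (hv : 0 ≤ v) (a : ℝ) :
    harm u v ≤ u * (1 - a) ^ 2 + v * a ^ 2 := by
  unfold harm
  rcases (add_nonneg hu hv).eq_or_lt with h | h
  · rw [← h]; simpa using by positivity
  · rw [div_le_iff₀ h]; nlinarith [sq_nonneg (u - (u + v) * a)]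

lemma harm_eq_action {u v : ℝ} (hu : 0 ≤ u) (hv : 0 ≤ v) :
    u * (1 - u / (u + v)) ^ 2 + v * (u / (u + v)) ^ 2 = harm u v := by
  unfold harm
  rcases (add_nonneg hu hv).eq_or_lt with h | h
  · obtain rfl : u = 0 := by linarith
    obtain rfl : v = 0 := by linarith
    simp
  · field_simp; ring

lemma harm_mul_add_le {P Q p q : ℝ} (hP : 0 ≤ P) (hQ : 0 ≤ Q) (hp : 0 ≤ p) (hq : 0 ≤ q) :
    harm (P * p) (Q * q) + P ^ 2 * Q ^ 2 / (P + Q) ^ 3 * (√p - √q) ^ 2 ≤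
      P * (1 - P / (P + Q)) ^ 2 * p + Q * (P / (P + Q)) ^ 2 * q := by
  obtain ⟨u, hu, rfl⟩ : ∃ u, 0 ≤ u ∧ p = u ^ 2 := ⟨√p, Real.sqrt_nonneg _, (Real.sq_sqrt hp).symm⟩
  obtain ⟨v, hv, rfl⟩ : ∃ u, 0 ≤ u ∧ q = u ^ 2 := ⟨√q, Real.sqrt_nonneg _, (Real.sq_sqrt hq).symm⟩
  rw [Real.sqrt_sq hu, Real.sqrt_sq hv]
  unfold harm
  rcases hP.eq_or_lt with rfl | hP
  · simp
  rcases hQ.eq_or_lt with rfl | hQ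
  · simp [hP.ne']
  rcases (add_nonneg (sq_nonneg u) (sq_nonneg v)).eq_or_lt with h | h
  · obtain rfl : u = 0 := by nlinarith
    obtain rfl : v = 0 := by nlinarith
    simp
  have hS : 0 < P * u ^ 2 + Q * v ^ 2 := by
    rcases hu.eq_or_lt with rfl | hu
    · have : 0 < v ^ 2 := by simpa using h
      positivity
    · positivity
  have key : P * (1 - P / (P + Q)) ^ 2 * u ^ 2 + Q * (P / (P + Q)) ^ 2 * v ^ 2
      - (P * u ^ 2) * (Q * v ^ 2) / (P * u ^ 2 + Q * v ^ 2)
      - P ^ 2 * Q ^ 2 / (P + Q) ^ 3 * (u - v) ^ 2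
      = P ^ 2 * Q ^ 2 * (u - v) ^ 2 * ((P + Q) * (u + v) ^ 2 - (P * u ^ 2 + Q * v ^ 2)) /
        ((P + Q) ^ 3 * (P * u ^ 2 + Q * v ^ 2)) := by
    field_simp; ring
  have h2 : 0 ≤ (P + Q) * (u + v) ^ 2 - (P * u ^ 2 + Q * v ^ 2) := by
    have : (P + Q) * (u + v) ^ 2 - (P * u ^ 2 + Q * v ^ 2) =
      P * v ^ 2 + Q * u ^ 2 + 2 * (P + Q) * (u * v) := by ring
    rw [this]; positivity
  have : 0 ≤ P ^ 2 * Q ^ 2 * (u - v) ^ 2 * ((P + Q) * (u + v) ^ 2 - (P * u ^ 2 + Q * v ^ 2)) /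
        ((P + Q) ^ 3 * (P * u ^ 2 + Q * v ^ 2)) := by positivity
  linarith

lemma sqrt_affinity_le {P Q : ℝ} (hP : 0 ≤ P) (hQ : 0 ≤ Q) :
    32 / 125 * (√P * √Q) - 48 / 625 * (P + Q) ≤ P ^ 2 * Q ^ 2 / (P + Q) ^ 3 := by
  obtain ⟨u, hu, rfl⟩ : ∃ u, 0 ≤ u ∧ P = u ^ 2 := ⟨√P, Real.sqrt_nonneg _, (Real.sq_sqrt hP).symm⟩
  obtain ⟨v, hv, rfl⟩ : ∃ u, 0 ≤ u ∧ Q = u ^ 2 := ⟨√Q, Real.sqrt_nonneg _, (Real.sq_sqrt hQ).symm⟩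
  rw [Real.sqrt_sq hu, Real.sqrt_sq hv]
  rcases (add_nonneg hP hQ).eq_or_lt with h | h
  · obtain rfl : u = 0 := by nlinarith
    obtain rfl : v = 0 := by nlinarith
    simp
  rw [le_div_iff₀ (by positivity)]
  have key : (u ^ 2) ^ 2 * (v ^ 2) ^ 2 -
      (32 / 125 * (u * v) - 48 / 625 * (u ^ 2 + v ^ 2)) * (u ^ 2 + v ^ 2) ^ 3 =
      (u * v - 2 / 5 * (u ^ 2 + v ^ 2)) ^ 2 *
        ((u * v) ^ 2 + 4 / 5 * (u * v) * (u ^ 2 + v ^ 2) + 12 / 25 * (u ^ 2 + v ^ 2) ^ 2) := by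
    ring
  have : 0 ≤ (u * v - 2 / 5 * (u ^ 2 + v ^ 2)) ^ 2 *
        ((u * v) ^ 2 + 4 / 5 * (u * v) * (u ^ 2 + v ^ 2) + 12 / 25 * (u ^ 2 + v ^ 2) ^ 2) := by
    positivity
  linarith

lemma sq_mul_sq_div_nonneg_le {P Q : ℝ} (hP : 0 ≤ P) (hQ : 0 ≤ Q) :
    P ^ 2 * Q ^ 2 / (P + Q) ^ 3 ≤ P := by
  rcases (add_nonneg hP hQ).eq_or_lt with h | h
  · rw [← h]; simpa using hP
  rw [div_le_iff₀ (by positivity)]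
  have : P * (P + Q) ^ 3 - P ^ 2 * Q ^ 2 =
      P ^ 4 + 3 * P ^ 3 * Q + 2 * P ^ 2 * Q ^ 2 + P * Q ^ 3 := by ring
  have : 0 ≤ P ^ 4 + 3 * P ^ 3 * Q + 2 * P ^ 2 * Q ^ 2 + P * Q ^ 3 := by positivity
  linarith

lemma one_sub_pow_le {h : ℝ} (h0 : 0 ≤ h) (h1 : h ≤ 1) (m : ℕ) : (1 - h) ^ m ≤ 1 / (1 + m * h) := by
  rw [le_div_iff₀ (by positivity)]
  calc (1 - h) ^ m * (1 + m * h) ≤ (1 - h) ^ m * (1 + h) ^ m := by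
        have := pow_nonneg (sub_nonneg.2 h1) m
        gcongr
        exact one_add_mul_le_pow (by linarith) m
    _ = (1 - h ^ 2) ^ m := by rw [← mul_pow]; ring
    _ ≤ 1 := pow_le_one₀ (by nlinarith) (by nlinarith)

lemma pi_map_swap {ι κ : Type*} [Fintype ι] [Fintype κ] {X : κ → Type*}
    [∀ j, MeasurableSpace (X j)] (μ : ∀ j, Measure (X j)) [∀ j, IsProbabilityMeasure (μ j)] :
    (Measure.pi fun _ : ι => Measure.pi μ).map (fun x j i => x i j) =
      Measure.pi fun j => Measure.pi fun _ : ι => μ j := by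
  have hm : Measurable fun (x : ι → ∀ j, X j) (j : κ) (i : ι) => x i j := by fun_prop
  symm
  refine Measure.pi_eq_generateFrom (C := fun j => Set.univ.pi '' Set.univ.pi
    fun _ : ι => {s : Set (X j) | MeasurableSet s}) (fun j => generateFrom_pi)
    (fun j => isPiSystem_pi) (fun j => ?_) ?_
  · refine ⟨fun _ => Set.univ, fun _ => ?_, fun _ => measure_lt_top _ _, Set.iUnion_const _⟩
    exact ⟨fun _ => Set.univ, fun _ _ => MeasurableSet.univ, Set.pi_univ _⟩
  · intro s hs
    choose t ht hts using hs
    have hmt : ∀ j i, MeasurableSet (t j i) := fun j i => ht j i trivial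
    have hpre : (fun (x : ι → ∀ j, X j) (j : κ) (i : ι) => x i j) ⁻¹' Set.univ.pi s =
        Set.univ.pi fun i => Set.univ.pi fun j => t j i := by
      ext x
      simp only [← hts, Set.mem_preimage, Set.mem_pi, Set.mem_univ, true_imp_iff]
      exact forall_comm
    rw [Measure.map_apply hm, hpre, Measure.pi_pi]
    · simp only [← hts, Measure.pi_pi]
      exact Finset.prod_comm
    · exact MeasurableSet.univ_pi fun j => hts j ▸ MeasurableSet.univ_pi (hmt j)

lemma pi_withDensity {ι : Type*} [Fintype ι] {X : ι → Type*} [∀ i, MeasurableSpace (X i)]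
    (R : ∀ i, Measure (X i)) [∀ i, IsFiniteMeasure (R i)] (f : ∀ i, X i → ℝ≥0)
    (hi : ∀ i, Integrable (fun x => (f i x : ℝ)) (R i)) :
    (Measure.pi fun i => (R i).withDensity fun x => (f i x : ℝ≥0∞)) =
      (Measure.pi R).withDensity fun x => ((∏ i, f i (x i) : ℝ≥0) : ℝ≥0∞) := by
  have (i : ι) : IsFiniteMeasure ((R i).withDensity fun x => (f i x : ℝ≥0∞)) :=
    isFiniteMeasure_withDensity (by
      have := (hi i).lintegral_lt_top.ne
      simpa using this)
  refine Measure.pi_eq fun s hs => ?_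
  rw [withDensity_apply _ (MeasurableSet.univ_pi hs), Measure.restrict_pi_pi]
  simp_rw [withDensity_apply _ (hs _)]
  have key (i : ι) : ∫⁻ x in s i, (f i x : ℝ≥0∞) ∂(R i) =
      ENNReal.ofReal (∫ x in s i, (f i x : ℝ) ∂(R i)) := by
    rw [ofReal_integral_eq_lintegral_ofReal (hi i).integrableOn (.of_forall fun x => by positivity)]
    simp
  simp_rw [key]
  rw [← ENNReal.ofReal_prod_of_nonneg (fun i _ => integral_nonneg fun x => by positivity),
    ← integral_fintype_prod_eq_prod, ofReal_integral_eq_lintegral_ofReal]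
  · refine lintegral_congr fun x => ?_
    rw [← NNReal.coe_prod, ENNReal.ofReal_coe_nnreal]
  · exact Integrable.fintype_prod_dep fun i => (hi i).integrableOn
  · exact .of_forall fun x => by positivity

lemma integral_sub_integral_le_tvDist {X : Type*} [MeasurableSpace X] (μ ν : Measure X)
    [IsProbabilityMeasure μ] [IsProbabilityMeasure ν] {f : X → ℝ} (hf : Measurable f) {B : ℝ}
    (h0 : ∀ x, 0 ≤ f x) (hB : ∀ x, f x ≤ B) :
    ∫ x, f x ∂μ - ∫ x, f x ∂ν ≤ B * tvDist μ ν := by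
  obtain ⟨x₀⟩ : Nonempty X := nonempty_of_isProbabilityMeasure μ
  have hB0 : 0 ≤ B := (h0 x₀).trans (hB x₀)
  obtain ⟨s, hs⟩ := exists_isHahnDecomposition ν μ
  have hi (ρ : Measure X) [IsFiniteMeasure ρ] : Integrable f ρ :=
    .of_bound hf.aestronglyMeasurable B (.of_forall fun x => by
      rw [Real.norm_of_nonneg (h0 x)]; exact hB x)
  rw [← integral_add_compl hs.measurableSet (hi μ), ← integral_add_compl hs.measurableSet (hi ν)]
  have h1 : ∫ x in sᶜ, f x ∂μ ≤ ∫ x in sᶜ, f x ∂ν :=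
    integral_mono_measure hs.ge_on_compl (.of_forall h0) (hi _)
  have h2 : ∫ x in s, (B - f x) ∂ν ≤ ∫ x in s, (B - f x) ∂μ :=
    integral_mono_measure hs.le_on (.of_forall fun x => sub_nonneg.2 (hB x))
      ((integrable_const B).sub (hi _))
  rw [integral_sub (integrable_const B) (hi _), integral_sub (integrable_const B) (hi _)] at h2
  simp only [integral_const, measureReal_restrict_apply_univ, smul_eq_mul] at h2
  have h3 : μ.real s - ν.real s ≤ tvDist μ ν := by
    refine (le_abs_self _).trans
      (le_ciSup (f := fun A : {s : Set X // MeasurableSet s} => |(μ A).toReal - (ν A).toReal|)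
        ⟨1, ?_⟩ ⟨s, hs.measurableSet⟩)
    rintro _ ⟨A, rfl⟩
    have := measureReal_le_one (μ := μ) (s := A)
    have := measureReal_le_one (μ := ν) (s := A)
    have := measureReal_nonneg (μ := μ) (s := A)
    have := measureReal_nonneg (μ := ν) (s := A)
    simp only [measureReal_def] at *
    exact abs_sub_le_iff.2 ⟨by linarith, by linarith⟩
  nlinarith

lemma tvDist_le_one {X : Type*} [MeasurableSpace X] (μ ν : Measure X)
    [IsProbabilityMeasure μ] [IsProbabilityMeasure ν] : tvDist μ ν ≤ 1 := by
  have : Nonempty {s : Set X // MeasurableSet s} := ⟨⟨∅, .empty⟩⟩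
  refine ciSup_le fun A => ?_
  have := measureReal_le_one (μ := μ) (s := A)
  have := measureReal_le_one (μ := ν) (s := A)
  have := measureReal_nonneg (μ := μ) (s := A)
  have := measureReal_nonneg (μ := ν) (s := A)
  simp only [measureReal_def] at *
  exact abs_sub_le_iff.2 ⟨by linarith, by linarith⟩

/-- Truncation at level `B`: a mean gap forces a total variation gap, provided the second moment
under `μ` is controlled. -/
lemma integral_sub_integral_le_tvDist_add {X : Type*} [MeasurableSpace X] (μ ν : Measure X)
    [IsProbabilityMeasure μ] [IsProbabilityMeasure ν] {f : X → ℝ} (hf : Measurable f) {B : ℝ}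
    (hB : 0 < B) (h0 : ∀ x, 0 ≤ f x) (h1 : ∀ x, f x ≤ 1) :
    ∫ x, f x ∂μ - ∫ x, f x ∂ν ≤ B * tvDist μ ν + (∫ x, f x ^ 2 ∂μ) / (4 * B) := by
  have hi (ρ : Measure X) [IsFiniteMeasure ρ] {g : X → ℝ} (hg : Measurable g) (g0 : ∀ x, 0 ≤ g x)
      (g1 : ∀ x, g x ≤ 1) : Integrable g ρ :=
    .of_bound hg.aestronglyMeasurable 1 (.of_forall fun x => by
      rw [Real.norm_of_nonneg (g0 x)]; exact g1 x)
  have hmin : Measurable fun x => min (f x) B := hf.min measurable_const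
  have hmin0 (x : X) : 0 ≤ min (f x) B := le_min (h0 x) hB.le
  have hmin1 (x : X) : min (f x) B ≤ 1 := (min_le_left _ _).trans (h1 x)
  have a1 := integral_sub_integral_le_tvDist μ ν hmin hmin0 fun x => min_le_right _ _
  have a2 : ∫ x, min (f x) B ∂ν ≤ ∫ x, f x ∂ν :=
    integral_mono (hi ν hmin hmin0 hmin1) (hi ν hf h0 h1) fun x => min_le_left _ _
  have a3 : ∫ x, f x ∂μ ≤ ∫ x, (min (f x) B + f x ^ 2 / (4 * B)) ∂μ := by
    have hsq : Integrable (fun x => f x ^ 2) μ :=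
      hi μ (hf.pow_const 2) (fun x => sq_nonneg _) fun x => pow_le_one₀ (h0 x) (h1 x)
    refine integral_mono (hi μ hf h0 h1) ((hi μ hmin hmin0 hmin1).add (hsq.div_const _))
      fun x => ?_
    have : f x ≤ B + f x ^ 2 / (4 * B) := by
      rw [← sub_le_iff_le_add', le_div_iff₀ (by positivity)]
      nlinarith [sq_nonneg (f x - 2 * B)]
    rcases le_total (f x) B with h | h
    · simp only [min_eq_left h]
      have : 0 ≤ f x ^ 2 / (4 * B) := by positivity
      linarith
    · simpa only [min_eq_right h]
  rw [integral_add (hi μ hmin hmin0 hmin1) ((hi μ (hf.pow_const 2) (fun x => sq_nonneg _)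
    fun x => pow_le_one₀ (h0 x) (h1 x)).div_const _), integral_div] at a3
  linarith

lemma measurable_harm {Y : Type*} [MeasurableSpace Y] {F G : Y → ℝ} (hF : Measurable F)
    (hG : Measurable G) : Measurable fun y => harm (F y) (G y) :=
  (hF.mul hG).div (hF.add hG)

lemma integrable_harm {Y : Type*} [MeasurableSpace Y] {ν : Measure Y} {F G : Y → ℝ≥0}
    (hF : Measurable F) (hG : Measurable G) (iF : Integrable (fun y => (F y : ℝ)) ν) :
    Integrable (fun y => harm (F y) (G y)) ν :=
  iF.mono' (measurable_harm hF.coe_nnreal_real hG.coe_nnreal_real).aestronglyMeasurable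
    (.of_forall fun y => by
      rw [Real.norm_of_nonneg (harm_nonneg (F y).coe_nonneg (G y).coe_nonneg)]
      exact harm_le_left (F y).2 (G y).2)

lemma integrable_sqrt_mul_sqrt {Y : Type*} [MeasurableSpace Y] {ν : Measure Y} {F G : Y → ℝ≥0}
    (hF : Measurable F) (hG : Measurable G) (iF : Integrable (fun y => (F y : ℝ)) ν)
    (iG : Integrable (fun y => (G y : ℝ)) ν) :
    Integrable (fun y => √(F y : ℝ) * √(G y : ℝ)) ν :=
  (iF.add iG).mono' (by fun_prop) (.of_forall fun y => by
    rw [Real.norm_of_nonneg (by positivity)]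
    have h1 := Real.sq_sqrt (F y).2
    have h2 := Real.sq_sqrt (G y).2
    simp only [Pi.add_apply, NNReal.val_eq_coe] at *
    nlinarith [sq_nonneg (√(F y : ℝ) - √(G y : ℝ)), sq_nonneg (√(F y : ℝ) + √(G y : ℝ))])

lemma sq_sqrt_sub_sqrt (u v : ℝ≥0) :
    (√(u : ℝ) - √(v : ℝ)) ^ 2 = u + v - 2 * (√(u : ℝ) * √(v : ℝ)) := by
  have h1 := Real.sq_sqrt u.2
  have h2 := Real.sq_sqrt v.2
  simp only [NNReal.val_eq_coe] at *
  linear_combination h1 + h2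

lemma integral_sq_sqrt_sub_sqrt {Y : Type*} [MeasurableSpace Y] {ν : Measure Y} {F G : Y → ℝ≥0}
    (hF : Measurable F) (hG : Measurable G) (iF : Integrable (fun y => (F y : ℝ)) ν)
    (iG : Integrable (fun y => (G y : ℝ)) ν) (F1 : ∫ y, (F y : ℝ) ∂ν = 1)
    (G1 : ∫ y, (G y : ℝ) ∂ν = 1) :
    ∫ y, (√(F y : ℝ) - √(G y : ℝ)) ^ 2 ∂ν = 2 - 2 * ∫ y, √(F y : ℝ) * √(G y : ℝ) ∂ν := by
  have iFG : Integrable (fun y => (F y + G y : ℝ)) ν := iF.add iG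
  simp_rw [sq_sqrt_sub_sqrt]
  rw [integral_sub iFG ((integrable_sqrt_mul_sqrt hF hG iF iG).const_mul 2),
    integral_add iF iG, integral_const_mul, F1, G1]
  norm_num

/-- Strict decrease of the harmonic affinity when an independent experiment is adjoined. -/
lemma integral_harm_prod_le {Y Z : Type*} [MeasurableSpace Y] [MeasurableSpace Z]
    {ν : Measure Y} {ξ : Measure Z} [SigmaFinite ν] [SigmaFinite ξ]
    {F G : Y → ℝ≥0} {p q : Z → ℝ≥0} (hF : Measurable F) (hG : Measurable G)
    (hp : Measurable p) (hq : Measurable q)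
    (iF : Integrable (fun y => (F y : ℝ)) ν) (iG : Integrable (fun y => (G y : ℝ)) ν)
    (ip : Integrable (fun y => (p y : ℝ)) ξ) (iq : Integrable (fun y => (q y : ℝ)) ξ)
    (F1 : ∫ y, (F y : ℝ) ∂ν = 1) (G1 : ∫ y, (G y : ℝ) ∂ν = 1)
    (p1 : ∫ y, (p y : ℝ) ∂ξ = 1) (q1 : ∫ y, (q y : ℝ) ∂ξ = 1)
    (hFG : 4 / 5 ≤ ∫ y, √(F y : ℝ) * √(G y : ℝ) ∂ν) :
    ∫ x, harm (F x.1 * p x.2) (G x.1 * q x.2) ∂(ν.prod ξ) ≤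
      ∫ y, harm (F y) (G y) ∂ν - 64 / 625 * (1 - ∫ z, √(p z : ℝ) * √(q z : ℝ) ∂ξ) := by
  set a : Y → ℝ := fun y => F y / (F y + G y) with ha
  have ma : Measurable a := by fun_prop
  have a0 (y : Y) : 0 ≤ a y := by positivity
  have a1 (y : Y) : a y ≤ 1 := div_le_one_of_le₀ (by linarith [(G y).2]) (by positivity)
  have iFa : Integrable (fun y => F y * (1 - a y) ^ 2) ν :=
    iF.mono' (by fun_prop) (.of_forall fun y => by
      rw [Real.norm_of_nonneg (by positivity)]
      exact mul_le_of_le_one_right (F y).2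
        (pow_le_one₀ (by linarith [a1 y]) (by linarith [a0 y])))
  have iGa : Integrable (fun y => G y * a y ^ 2) ν :=
    iG.mono' (by fun_prop) (.of_forall fun y => by
      rw [Real.norm_of_nonneg (by positivity)]
      exact mul_le_of_le_one_right (G y).2 (pow_le_one₀ (a0 y) (a1 y)))
  set K : Y → ℝ := fun y => (F y : ℝ) ^ 2 * (G y : ℝ) ^ 2 / (F y + G y : ℝ) ^ 3 with hK
  have iK : Integrable K ν :=
    iF.mono' (by fun_prop) (.of_forall fun y => by
      rw [Real.norm_of_nonneg (by positivity)]
      exact sq_mul_sq_div_nonneg_le (F y).2 (G y).2)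
  have isq := integrable_sqrt_mul_sqrt hF hG iF iG
  have isq' := integrable_sqrt_mul_sqrt hp hq ip iq
  set D : Z → ℝ := fun z => (√(p z : ℝ) - √(q z : ℝ)) ^ 2 with hD
  have iD : Integrable D ξ := by
    simp only [hD, sq_sqrt_sub_sqrt]
    exact (ip.add iq).sub (isq'.const_mul 2)
  have iFG : Integrable (fun y => (F y + G y : ℝ)) ν := iF.add iG
  have K_le : 32 / 625 ≤ ∫ y, K y ∂ν := by
    calc (32 / 625 : ℝ) ≤
          ∫ y, (32 / 125 * (√(F y : ℝ) * √(G y : ℝ)) - 48 / 625 * (F y + G y)) ∂ν := by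
          rw [integral_sub (isq.const_mul _) (iFG.const_mul _), integral_const_mul,
            integral_const_mul, integral_add iF iG, F1, G1]
          linarith
      _ ≤ _ := integral_mono ((isq.const_mul _).sub (iFG.const_mul _)) iK
          fun y => sqrt_affinity_le (F y).2 (G y).2
  have hDint : ∫ z, D z ∂ξ = 2 - 2 * ∫ z, √(p z : ℝ) * √(q z : ℝ) ∂ξ :=
    integral_sq_sqrt_sub_sqrt hp hq ip iq p1 q1
  have hD0 : 0 ≤ ∫ z, D z ∂ξ := integral_nonneg fun z => sq_nonneg _
  have iharm : Integrable (fun x : Y × Z => harm (F x.1 * p x.2) (G x.1 * q x.2)) (ν.prod ξ) := by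
    have := integrable_harm (ν := ν.prod ξ) (F := fun x : Y × Z => F x.1 * p x.2)
      (G := fun x : Y × Z => G x.1 * q x.2) (by fun_prop) (by fun_prop)
      (by simpa using iF.mul_prod ip)
    simpa using this
  have iFGa : Integrable (fun x : Y × Z => F x.1 * (1 - a x.1) ^ 2 * p x.2 +
      G x.1 * a x.1 ^ 2 * q x.2) (ν.prod ξ) := (iFa.mul_prod ip).add (iGa.mul_prod iq)
  have main : ∫ x, harm (F x.1 * p x.2) (G x.1 * q x.2) ∂(ν.prod ξ) ≤
      ∫ x : Y × Z, (F x.1 * (1 - a x.1) ^ 2 * p x.2 + G x.1 * a x.1 ^ 2 * q x.2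
        - K x.1 * D x.2) ∂(ν.prod ξ) := by
    refine integral_mono iharm (iFGa.sub (iK.mul_prod iD))
      fun x => ?_
    have := harm_mul_add_le (F x.1).2 (G x.1).2 (p x.2).2 (q x.2).2
    simp only [NNReal.val_eq_coe] at this
    simp only [ha, hK, hD]
    linarith
  rw [integral_sub iFGa (iK.mul_prod iD),
    integral_add (iFa.mul_prod ip) (iGa.mul_prod iq),
    integral_prod_mul (fun y => F y * (1 - a y) ^ 2) (fun z => (p z : ℝ)),
    integral_prod_mul (fun y => G y * a y ^ 2) (fun z => (q z : ℝ)), integral_prod_mul K D,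
    p1, q1, mul_one, mul_one, ← integral_add iFa iGa] at main
  have e : ∫ y, (F y * (1 - a y) ^ 2 + G y * a y ^ 2) ∂ν = ∫ y, harm (F y) (G y) ∂ν :=
    integral_congr_ae (.of_forall fun y => harm_eq_action (F y).2 (G y).2)
  rw [e] at main
  nlinarith

/-- Harmonic affinity of the `k`-fold products of two densities. -/
noncomputable def harmPow {X : Type*} [MeasurableSpace X] (ν : Measure X) (f g : X → ℝ≥0)
    (k : ℕ) : ℝ :=
  ∫ z, harm (∏ i, f (z i) : ℝ≥0) (∏ i, g (z i) : ℝ≥0) ∂(Measure.pi fun _ : Fin k => ν)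

lemma harmPow_add_le {X : Type*} [MeasurableSpace X] {ν : Measure X} [SigmaFinite ν]
    {f g : X → ℝ≥0} (hf : Measurable f) (hg : Measurable g)
    (jf : Integrable (fun y => (f y : ℝ)) ν) (jg : Integrable (fun y => (g y : ℝ)) ν)
    (f1 : ∫ y, (f y : ℝ) ∂ν = 1) (g1 : ∫ y, (g y : ℝ) ∂ν = 1) (n m : ℕ)
    (hfg : 4 / 5 ≤ (∫ y, √(f y : ℝ) * √(g y : ℝ) ∂ν) ^ n) :
    harmPow ν f g (n + m) ≤
      harmPow ν f g n - 64 / 625 * (1 - (∫ y, √(f y : ℝ) * √(g y : ℝ) ∂ν) ^ m) := by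
  have mpow {f : X → ℝ≥0} (hf : Measurable f) (k : ℕ) :
      Measurable fun z : Fin k → X => ∏ i, f (z i) := by fun_prop
  have ipow {f : X → ℝ≥0} (jf : Integrable (fun y => (f y : ℝ)) ν) (k : ℕ) :
      Integrable (fun z : Fin k → X => ((∏ i, f (z i) : ℝ≥0) : ℝ)) (Measure.pi fun _ => ν) := by
    simp_rw [NNReal.coe_prod]
    exact Integrable.fintype_prod fun _ => jf
  have opow {f : X → ℝ≥0} (f1 : ∫ y, (f y : ℝ) ∂ν = 1) (k : ℕ) :
      ∫ z : Fin k → X, ((∏ i, f (z i) : ℝ≥0) : ℝ) ∂(Measure.pi fun _ => ν) = 1 := by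
    simp_rw [NNReal.coe_prod]
    rw [integral_fintype_prod_eq_pow (fun x => (f x : ℝ)), f1, one_pow]
  have spow (k : ℕ) :
      ∫ z : Fin k → X, √((∏ i, f (z i) : ℝ≥0) : ℝ) * √((∏ i, g (z i) : ℝ≥0) : ℝ)
        ∂(Measure.pi fun _ => ν) = (∫ y, √(f y : ℝ) * √(g y : ℝ) ∂ν) ^ k := by
    simp_rw [NNReal.coe_prod, Real.sqrt_prod Finset.univ fun _ _ => NNReal.coe_nonneg _,
      ← Finset.prod_mul_distrib]
    rw [integral_fintype_prod_eq_pow (fun x => √(f x : ℝ) * √(g x : ℝ)), Fintype.card_fin]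
  have h := integral_harm_prod_le (mpow hf n) (mpow hg n) (mpow hf m) (mpow hg m) (ipow jf n)
    (ipow jg n) (ipow jf m) (ipow jg m) (opow f1 n) (opow g1 n) (opow f1 m) (opow g1 m)
    (by rwa [spow])
  rw [spow] at h
  refine le_of_eq_of_le ?_ h
  have e1 := measurePreserving_piCongrLeft (fun _ : Fin (n + m) => ν) finSumFinEquiv
  have e2 := measurePreserving_sumPiEquivProdPi_symm (fun _ : Fin n ⊕ Fin m => ν)
  rw [harmPow, ← e1.integral_comp', ← e2.integral_comp']
  refine integral_congr_ae (.of_forall fun z => ?_)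
  have e3 (f : X → ℝ≥0) : ∏ i, f (MeasurableEquiv.piCongrLeft (fun _ : Fin (n + m) => X)
      finSumFinEquiv ((MeasurableEquiv.sumPiEquivProdPi fun _ : Fin n ⊕ Fin m => X).symm z) i) =
      (∏ i, f (z.1 i)) * ∏ i, f (z.2 i) := by
    rw [← finSumFinEquiv.prod_comp, Fintype.prod_sum_type]
    simp only [MeasurableEquiv.coe_piCongrLeft, Equiv.piCongrLeft_apply_apply]
    rfl
  simp only [e3, NNReal.coe_mul]

/-- Quadratic loss of the posterior guess `a` for the event that the hidden bit is `true`. -/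
def brier (s : Bool) (a : ℝ) : ℝ := if s then (1 - a) ^ 2 else a ^ 2

lemma brier_nonneg (s : Bool) (a : ℝ) : 0 ≤ brier s a := by
  cases s <;> simp only [brier] <;> positivity

lemma brier_le_one (s : Bool) {a : ℝ} (h0 : 0 ≤ a) (h1 : a ≤ 1) : brier s a ≤ 1 := by
  cases s
  · exact pow_le_one₀ h0 h1
  · exact pow_le_one₀ (sub_nonneg.2 h1) (by linarith)

lemma measurable_brier {Y : Type*} [MeasurableSpace Y] (s : Bool) {a : Y → ℝ} (ha : Measurable a) :
    Measurable fun y => brier s (a y) := by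
  cases s
  · exact ha.pow_const 2
  · exact (measurable_const.sub ha).pow_const 2

lemma integrable_of_mem_unit {Y : Type*} [MeasurableSpace Y] (ν : Measure Y) [IsFiniteMeasure ν]
    {g : Y → ℝ} (hg : Measurable g) (g0 : ∀ x, 0 ≤ g x) (g1 : ∀ x, g x ≤ 1) : Integrable g ν :=
  .of_bound hg.aestronglyMeasurable 1 (.of_forall fun x => by
    rw [Real.norm_of_nonneg (g0 x)]; exact g1 x)

/-- The utility `1 - l * brier s a` attached to one coordinate. -/
def util (l : ℝ) (s : Bool) (a : ℝ) : ℝ := 1 - l * brier s a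

lemma util_nonneg {l : ℝ} (hl1 : l ≤ 1) (s : Bool) {a : ℝ} (h0 : 0 ≤ a) (h1 : a ≤ 1) :
    0 ≤ util l s a := by
  unfold util
  nlinarith [brier_nonneg s a, brier_le_one s h0 h1]

lemma util_le_one {l : ℝ} (hl0 : 0 ≤ l) (s : Bool) (a : ℝ) : util l s a ≤ 1 := by
  unfold util
  nlinarith [mul_nonneg hl0 (brier_nonneg s a)]

lemma measurable_util {Y : Type*} [MeasurableSpace Y] (l : ℝ) (s : Bool) {a : Y → ℝ}
    (ha : Measurable a) : Measurable fun y => util l s (a y) :=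
  measurable_const.sub ((measurable_brier s ha).const_mul l)

/-- No procedure acting on the product data beats the coordinatewise Bayes value of the product
utility under the uniform prior. -/
lemma sum_integral_prod_util_le {ι : Type*} [Fintype ι] [DecidableEq ι] {Y : ι → Type*}
    [∀ j, MeasurableSpace (Y j)] {W : Type*} [MeasurableSpace W] (ν : ∀ j, Measure (Y j))
    [∀ j, IsFiniteMeasure (ν j)] (F : ∀ j, Bool → Y j → ℝ≥0) (hF : ∀ j s, Measurable (F j s))
    (iF : ∀ j s, Integrable (fun y => (F j s y : ℝ)) (ν j))
    (F1 : ∀ j s, ∫ y, (F j s y : ℝ) ∂(ν j) = 1)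
    (κ : Kernel (∀ j, Y j) W) [IsMarkovKernel κ] {a : ι → W → ℝ} (ha : ∀ j, Measurable (a j))
    (a0 : ∀ j w, 0 ≤ a j w) (a1 : ∀ j w, a j w ≤ 1) {l : ℝ} (l0 : 0 ≤ l) (l1 : l ≤ 1) :
    ∑ θ : ι → Bool, ∫ z, (∫ w, ∏ j, util l (θ j) (a j w) ∂(κ z))
        ∂(Measure.pi fun j => (ν j).withDensity fun y => (F j (θ j) y : ℝ≥0∞)) ≤
      ∏ j, (2 - l * ∫ y, harm (F j true y) (F j false y) ∂(ν j)) := by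
  set u : (ι → Bool) → W → ℝ := fun θ w => ∏ j, util l (θ j) (a j w) with hu
  have um (θ) : Measurable (u θ) :=
    Finset.measurable_prod _ fun j _ => measurable_util l (θ j) (ha j)
  have u0 (θ w) : 0 ≤ u θ w :=
    Finset.prod_nonneg fun j _ => util_nonneg l1 _ (a0 j w) (a1 j w)
  have u1 (θ w) : u θ w ≤ 1 :=
    Finset.prod_le_one (fun j _ => util_nonneg l1 _ (a0 j w) (a1 j w))
      fun j _ => util_le_one l0 _ _
  have iu (θ z) : Integrable (u θ) (κ z) := integrable_of_mem_unit _ (um θ) (u0 θ) (u1 θ)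
  have φm (θ) : Measurable fun z => ∫ w, u θ w ∂(κ z) :=
    (um θ).stronglyMeasurable.integral_kernel.measurable
  have φ0 (θ z) : 0 ≤ ∫ w, u θ w ∂(κ z) := integral_nonneg (u0 θ)
  have φ1 (θ z) : ∫ w, u θ w ∂(κ z) ≤ 1 := by
    simpa using integral_mono (iu θ z) (integrable_const 1) (u1 θ)
  have iprod (θ : ι → Bool) : Integrable (fun z : ∀ j, Y j => ∏ j, (F j (θ j) (z j) : ℝ))
      (Measure.pi ν) := Integrable.fintype_prod_dep fun j => iF j (θ j)
  have hm (θ : ι → Bool) : Measurable fun z : ∀ j, Y j => ∏ j, F j (θ j) (z j) :=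
    Finset.measurable_prod _ fun j _ => (hF j (θ j)).comp (measurable_pi_apply j)
  have iφ (θ : ι → Bool) : Integrable (fun z : ∀ j, Y j =>
      (∏ j, (F j (θ j) (z j) : ℝ)) * ∫ w, u θ w ∂(κ z)) (Measure.pi ν) := by
    refine (iprod θ).mono' ?_ (.of_forall fun z => ?_)
    · exact (iprod θ).aestronglyMeasurable.mul (φm θ).aestronglyMeasurable
    · rw [Real.norm_of_nonneg (mul_nonneg (by positivity) (φ0 θ z))]
      exact mul_le_of_le_one_right (by positivity) (φ1 θ z)
  have step (θ : ι → Bool) : ∫ z, (∫ w, u θ w ∂(κ z))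
        ∂(Measure.pi fun j => (ν j).withDensity fun y => (F j (θ j) y : ℝ≥0∞)) =
      ∫ z, (∏ j, (F j (θ j) (z j) : ℝ)) * ∫ w, u θ w ∂(κ z) ∂(Measure.pi ν) := by
    rw [pi_withDensity ν (fun j => F j (θ j)) (fun j => iF j (θ j)),
      integral_withDensity_eq_integral_smul (hm θ)]
    simp only [NNReal.smul_def, NNReal.coe_prod, smul_eq_mul]
  have iG (j : ι) : Integrable (fun y => (F j true y + F j false y : ℝ)) (ν j) :=
    (iF j true).add (iF j false)
  have iH (j : ι) : Integrable (fun y => harm (F j true y) (F j false y)) (ν j) :=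
    integrable_harm (hF j true) (hF j false) (iF j true)
  have iV (j : ι) : Integrable (fun y => (F j true y + F j false y : ℝ) -
      l * harm (F j true y) (F j false y)) (ν j) := (iG j).sub ((iH j).const_mul l)
  have eV (j : ι) : ∫ y, ((F j true y + F j false y : ℝ) -
      l * harm (F j true y) (F j false y)) ∂(ν j) =
      2 - l * ∫ y, harm (F j true y) (F j false y) ∂(ν j) := by
    rw [integral_sub (iG j) ((iH j).const_mul l), integral_add (iF j true) (iF j false),
      integral_const_mul, F1, F1]
    norm_num
  calc _ = ∫ z, ∑ θ : ι → Bool, (∏ j, (F j (θ j) (z j) : ℝ)) * ∫ w, u θ w ∂(κ z)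
          ∂(Measure.pi ν) := by
        rw [integral_finsetSum _ fun θ _ => iφ θ]
        exact Finset.sum_congr rfl fun θ _ => step θ
    _ ≤ ∫ z : ∀ j, Y j, ∏ j, ((F j true (z j) + F j false (z j) : ℝ) -
          l * harm (F j true (z j)) (F j false (z j))) ∂(Measure.pi ν) := by
        refine integral_mono (integrable_finsetSum _ fun θ _ => iφ θ)
          (Integrable.fintype_prod_dep iV) fun z => ?_
        have e : ∑ θ : ι → Bool, (∏ j, (F j (θ j) (z j) : ℝ)) * ∫ w, u θ w ∂(κ z) =
            ∫ w, ∏ j, ∑ s : Bool, (F j s (z j) : ℝ) * util l s (a j w) ∂(κ z) := by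
          simp_rw [← integral_const_mul]
          rw [← integral_finsetSum _ fun θ _ => (iu θ z).const_mul _]
          refine integral_congr_ae (.of_forall fun w => ?_)
          simp only [hu, Fintype.prod_sum, Finset.prod_mul_distrib]
        simp only [e]
        have le (w : W) : ∏ j, ∑ s : Bool, (F j s (z j) : ℝ) * util l s (a j w) ≤
            ∏ j, ((F j true (z j) + F j false (z j) : ℝ) -
              l * harm (F j true (z j)) (F j false (z j))) := by
          refine Finset.prod_le_prod (fun j _ => Finset.sum_nonneg fun s _ =>
            mul_nonneg (NNReal.coe_nonneg _) (util_nonneg l1 _ (a0 j w) (a1 j w))) fun j _ => ?_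
          have := harm_le_action (F j true (z j)).coe_nonneg (F j false (z j)).coe_nonneg (a j w)
          simp only [Fintype.sum_bool, util, brier, if_true, Bool.false_eq_true, if_false]
          nlinarith [mul_le_mul_of_nonneg_left this l0]
        have iL : Integrable (fun w => ∏ j, ∑ s : Bool, (F j s (z j) : ℝ) * util l s (a j w))
            (κ z) := by
          simp_rw [Fintype.prod_sum, Finset.prod_mul_distrib]
          exact integrable_finsetSum _ fun θ _ => (iu θ z).const_mul _
        simpa using integral_mono iL (integrable_const _) le
    _ = _ := by
        rw [integral_fintype_prod_eq_prod (fun j y => (F j true y + F j false y : ℝ) -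
          l * harm (F j true y) (F j false y))]
        exact Finset.prod_congr rfl fun j _ => eV j

lemma sum_integral_util {Y : Type*} [MeasurableSpace Y] (ν : Measure Y) (F : Bool → Y → ℝ≥0)
    (hF : ∀ s, Measurable (F s))
    (μ : Bool → Measure Y) [∀ s, IsProbabilityMeasure (μ s)]
    (hμ : ∀ s, μ s = ν.withDensity fun y => (F s y : ℝ≥0∞)) (l : ℝ) :
    ∑ s, ∫ y, util l s (F true y / (F true y + F false y)) ∂(μ s) =
        2 - l * ∫ y, harm (F true y) (F false y) ∂ν ∧
      ∑ s, ∫ y, util l s (F true y / (F true y + F false y)) ^ 2 ∂(μ s) ≤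
        2 - 2 * l * ∫ y, harm (F true y) (F false y) ∂ν + 2 * l ^ 2 := by
  set a : Y → ℝ := fun y => F true y / (F true y + F false y) with ha
  have ma : Measurable a := by fun_prop
  have a0 (y : Y) : 0 ≤ a y := by positivity
  have a1 (y : Y) : a y ≤ 1 :=
    div_le_one_of_le₀ (by linarith [(F false y).coe_nonneg]) (by positivity)
  have b0 (s y) := brier_nonneg s (a y)
  have b1 (s y) := brier_le_one s (a0 y) (a1 y)
  have ib (s : Bool) : Integrable (fun y => brier s (a y)) (μ s) :=
    integrable_of_mem_unit _ (measurable_brier s ma) (b0 s) (b1 s)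
  have ib' (s : Bool) : Integrable (fun y => F s y * brier s (a y)) ν := by
    have := ib s
    rw [hμ, integrable_withDensity_iff_integrable_smul (hF s)] at this
    exact this
  have total : ∑ s, ∫ y, brier s (a y) ∂(μ s) = ∫ y, harm (F true y) (F false y) ∂ν := by
    have (s : Bool) : ∫ y, brier s (a y) ∂(μ s) = ∫ y, F s y * brier s (a y) ∂ν := by
      rw [hμ, integral_withDensity_eq_integral_smul (hF s)]
      rfl
    rw [Fintype.sum_bool, this, this, ← integral_add (ib' true) (ib' false)]
    refine integral_congr_ae (.of_forall fun y => ?_)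
    simp only [brier, if_true, Bool.false_eq_true, if_false]
    exact harm_eq_action (F true y).coe_nonneg (F false y).coe_nonneg
  have first (s : Bool) : ∫ y, util l s (a y) ∂(μ s) = 1 - l * ∫ y, brier s (a y) ∂(μ s) := by
    simp only [util]
    rw [integral_sub (integrable_const 1) ((ib s).const_mul l), integral_const_mul]
    simp
  have second (s : Bool) : ∫ y, util l s (a y) ^ 2 ∂(μ s) ≤
      1 - 2 * l * ∫ y, brier s (a y) ∂(μ s) + l ^ 2 := by
    have i1 : Integrable (fun y => 1 - 2 * l * brier s (a y)) (μ s) :=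
      (integrable_const 1).sub ((ib s).const_mul (2 * l))
    have ib2 : Integrable (fun y => brier s (a y) ^ 2) (μ s) :=
      integrable_of_mem_unit _ ((measurable_brier s ma).pow_const 2) (fun y => sq_nonneg _)
        fun y => pow_le_one₀ (b0 s y) (b1 s y)
    have isq : Integrable (fun y => util l s (a y) ^ 2) (μ s) := by
      have : (fun y => util l s (a y) ^ 2) =
          fun y => (1 - 2 * l * brier s (a y)) + l ^ 2 * brier s (a y) ^ 2 := by
        ext y; simp only [util]; ring
      rw [this]
      exact i1.add (ib2.const_mul _)
    calc _ ≤ ∫ y, ((1 - 2 * l * brier s (a y)) + l ^ 2) ∂(μ s) := by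
          refine integral_mono isq (i1.add (integrable_const _)) fun y => ?_
          have : brier s (a y) ^ 2 ≤ 1 := pow_le_one₀ (b0 s y) (b1 s y)
          simp only [util]
          nlinarith [mul_le_mul_of_nonneg_left this (sq_nonneg l)]
      _ = _ := by
          rw [integral_add i1 (integrable_const _),
            integral_sub (integrable_const 1) ((ib s).const_mul (2 * l)), integral_const_mul]
          simp
  constructor
  · rw [← total, Fintype.sum_bool, Fintype.sum_bool, first, first]; ring
  · rw [← total, Fintype.sum_bool, Fintype.sum_bool]
    linarith [second true, second false]

/-- A sum over hidden bits of product statistics of product data factorises over coordinates. -/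
lemma sum_integral_prod_swap {ι κ : Type*} [Fintype ι] [DecidableEq ι] [Fintype κ] {X : ι → Type*}
    [∀ j, MeasurableSpace (X j)] (p : ∀ j, Bool → Measure (X j))
    [∀ j s, IsProbabilityMeasure (p j s)] (h : ∀ j, Bool → (κ → X j) → ℝ)
    (hh : ∀ j s, Measurable (h j s)) :
    ∑ θ : ι → Bool, ∫ w, ∏ j, h j (θ j) (fun i => w i j)
        ∂(Measure.pi fun _ : κ => Measure.pi fun j => p j (θ j)) =
      ∏ j, ∑ s, ∫ z, h j s z ∂(Measure.pi fun _ : κ => p j s) := by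
  rw [Fintype.prod_sum]
  refine Finset.sum_congr rfl fun θ _ => ?_
  have hm : Measurable fun z : ∀ j, κ → X j => ∏ j, h j (θ j) (z j) :=
    Finset.measurable_prod _ fun j _ => (hh j (θ j)).comp (measurable_pi_apply j)
  have sm : Measurable fun (x : κ → ∀ j, X j) (j : ι) (i : κ) => x i j := by fun_prop
  rw [← integral_fintype_prod_eq_prod (fun j => h j (θ j)), ← pi_map_swap,
    integral_map sm.aemeasurable hm.aestronglyMeasurable]

/-- The quantitative two-point comparison: total variation error `t` at every hypercube vertex
forces the product Bayes values for `n` and `n + m` samples to be close. -/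
lemma prod_sub_prod_le {ι : Type*} [Fintype ι] [DecidableEq ι] {n m : ℕ} {X : ι → Type*}
    [∀ j, MeasurableSpace (X j)] (ν : ∀ j, Measure (X j)) [∀ j, IsFiniteMeasure (ν j)]
    (f : ∀ j, Bool → X j → ℝ≥0) (hf : ∀ j s, Measurable (f j s))
    (p : ∀ j, Bool → Measure (X j)) [∀ j s, IsProbabilityMeasure (p j s)]
    (hp : ∀ j s, p j s = (ν j).withDensity fun x => (f j s x : ℝ≥0∞))
    (jf : ∀ j s, Integrable (fun x => (f j s x : ℝ)) (ν j))
    (f1 : ∀ j s, ∫ x, (f j s x : ℝ) ∂(ν j) = 1)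
    (T : Kernel (Fin n → ∀ j, X j) (Fin (n + m) → ∀ j, X j)) [IsMarkovKernel T] {t l B : ℝ}
    (ht : ∀ θ : ι → Bool, tvDist (Measure.pi fun _ : Fin (n + m) => Measure.pi fun j => p j (θ j))
      ((Measure.pi fun _ : Fin n => Measure.pi fun j => p j (θ j)).bind T) ≤ t)
    (l0 : 0 ≤ l) (l1 : l ≤ 1) (hB : 0 < B) :
    ∏ j, (2 - l * harmPow (ν j) (f j true) (f j false) (n + m)) -
        ∏ j, (2 - l * harmPow (ν j) (f j true) (f j false) n) ≤
      2 ^ Fintype.card ι * (B * t) +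
        (∏ j, (2 - 2 * l * harmPow (ν j) (f j true) (f j false) (n + m) + 2 * l ^ 2)) /
          (4 * B) := by
  set F : ∀ k j, Bool → (Fin k → X j) → ℝ≥0 := fun k j s z => ∏ i, f j s (z i) with hFdef
  have hF (k j s) : Measurable (F k j s) := by
    have := hf j s
    simp only [hFdef]; fun_prop
  have iF (k j s) : Integrable (fun z => (F k j s z : ℝ)) (Measure.pi fun _ => ν j) := by
    simp only [hFdef, NNReal.coe_prod]
    exact Integrable.fintype_prod fun _ => jf j s
  have F1 (k j s) : ∫ z, (F k j s z : ℝ) ∂(Measure.pi fun _ => ν j) = 1 := by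
    simp only [hFdef, NNReal.coe_prod]
    rw [integral_fintype_prod_eq_pow (fun x => (f j s x : ℝ)), f1, one_pow]
  have pF (k j s) : (Measure.pi fun _ : Fin k => p j s) =
      (Measure.pi fun _ => ν j).withDensity fun z => (F k j s z : ℝ≥0∞) := by
    rw [hp]
    exact pi_withDensity (fun _ : Fin k => ν j) (fun _ => f j s) fun _ => jf j s
  set b : ∀ j, (Fin (n + m) → X j) → ℝ := fun j z =>
    F (n + m) j true z / (F (n + m) j true z + F (n + m) j false z) with hb
  have bm (j) : Measurable (b j) := by
    have := hF (n + m) j true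
    have := hF (n + m) j false
    simp only [hb]; fun_prop
  have b0 (j z) : 0 ≤ b j z := by positivity
  have b1 (j z) : b j z ≤ 1 :=
    div_le_one_of_le₀ (by linarith [(F (n + m) j false z).coe_nonneg]) (by positivity)
  set a : ι → (Fin (n + m) → ∀ j, X j) → ℝ := fun j w => b j fun i => w i j with ha
  have am (j) : Measurable (a j) := (bm j).comp (by fun_prop)
  set g : (ι → Bool) → (Fin (n + m) → ∀ j, X j) → ℝ := fun θ w => ∏ j, util l (θ j) (a j w)
    with hg
  have gm (θ) : Measurable (g θ) :=
    Finset.measurable_prod _ fun j _ => measurable_util l (θ j) (am j)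
  have g0 (θ w) : 0 ≤ g θ w :=
    Finset.prod_nonneg fun j _ => util_nonneg l1 _ (b0 j _) (b1 j _)
  have g1 (θ w) : g θ w ≤ 1 :=
    Finset.prod_le_one (fun j _ => util_nonneg l1 _ (b0 j _) (b1 j _))
      fun j _ => util_le_one l0 _ _
  have coord (j) := sum_integral_util (Measure.pi fun _ => ν j) (F (n + m) j) (hF (n + m) j)
    (fun s => Measure.pi fun _ => p j s) (pF (n + m) j) l
  have first : ∑ θ, ∫ w, g θ w ∂(Measure.pi fun _ : Fin (n + m) => Measure.pi fun j => p j (θ j)) =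
      ∏ j, (2 - l * harmPow (ν j) (f j true) (f j false) (n + m)) :=
    (sum_integral_prod_swap p (fun j s z => util l s (b j z))
      fun j s => measurable_util l s (bm j)).trans
      (Finset.prod_congr rfl fun j _ => (coord j).1)
  have second : ∑ θ, ∫ w, g θ w ^ 2
        ∂(Measure.pi fun _ : Fin (n + m) => Measure.pi fun j => p j (θ j)) ≤
      ∏ j, (2 - 2 * l * harmPow (ν j) (f j true) (f j false) (n + m) + 2 * l ^ 2) := by
    have := sum_integral_prod_swap (κ := Fin (n + m)) p (fun j s z => util l s (b j z) ^ 2)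
      fun j s => (measurable_util l s (bm j)).pow_const 2
    simp only [hg, ← Finset.prod_pow]
    rw [this]
    exact Finset.prod_le_prod (fun j _ => Finset.sum_nonneg fun s _ =>
      integral_nonneg fun z => sq_nonneg _) fun j _ => (coord j).2
  have swapm : Measurable fun (z : ∀ j, Fin n → X j) (i : Fin n) (j : ι) => z j i := by fun_prop
  have swapm' : Measurable fun (x : Fin n → ∀ j, X j) (j : ι) (i : Fin n) => x i j := by fun_prop
  have third : ∑ θ, ∫ w, g θ w
        ∂((Measure.pi fun _ : Fin n => Measure.pi fun j => p j (θ j)).bind T) ≤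
      ∏ j, (2 - l * harmPow (ν j) (f j true) (f j false) n) := by
    refine le_of_eq_of_le (Finset.sum_congr rfl fun θ _ => ?_)
      (sum_integral_prod_util_le (fun j => Measure.pi fun _ : Fin n => ν j) (F n) (hF n) (iF n)
        (F1 n) (T.comap _ swapm) am (fun j w => b0 j _) (fun j w => b1 j _) l0 l1)
    simp_rw [← pF]
    rw [← pi_map_swap, integral_map swapm'.aemeasurable
      (by exact (gm θ).stronglyMeasurable.integral_kernel.aestronglyMeasurable),
      Measure.comp_eq_comp_const_apply, Kernel.integral_comp]
    · rfl
    · exact integrable_of_mem_unit _ (gm θ) (g0 θ) (g1 θ)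
  have gap (θ) := integral_sub_integral_le_tvDist_add
    (Measure.pi fun _ : Fin (n + m) => Measure.pi fun j => p j (θ j))
    ((Measure.pi fun _ : Fin n => Measure.pi fun j => p j (θ j)).bind T)
    (gm θ) hB (g0 θ) (g1 θ)
  have total := Finset.sum_le_sum fun θ (_ : θ ∈ Finset.univ) => (gap θ).trans
    (add_le_add_left (mul_le_mul_of_nonneg_left (ht θ) hB.le) _)
  rw [Finset.sum_sub_distrib, Finset.sum_add_distrib, ← Finset.sum_div, first] at total
  simp only [Finset.sum_const, Finset.card_univ, Fintype.card_fun, Fintype.card_bool,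
    nsmul_eq_mul, Nat.cast_pow, Nat.cast_ofNat] at total
  have := div_le_div_of_nonneg_right second (by positivity : 0 ≤ 4 * B)
  linarith

lemma harmPow_nonneg {X : Type*} [MeasurableSpace X] (ν : Measure X) (f g : X → ℝ≥0) (k : ℕ) :
    0 ≤ harmPow ν f g k :=
  integral_nonneg fun _ => harm_nonneg (NNReal.coe_nonneg _) (NNReal.coe_nonneg _)

lemma harmPow_le_one {X : Type*} [MeasurableSpace X] {ν : Measure X} [SigmaFinite ν]
    {f g : X → ℝ≥0} (hf : Measurable f) (hg : Measurable g)
    (jf : Integrable (fun y => (f y : ℝ)) ν) (f1 : ∫ y, (f y : ℝ) ∂ν = 1) (k : ℕ) :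
    harmPow ν f g k ≤ 1 := by
  have i : Integrable (fun z : Fin k → X => ((∏ i, f (z i) : ℝ≥0) : ℝ))
      (Measure.pi fun _ => ν) := by
    simp_rw [NNReal.coe_prod]
    exact Integrable.fintype_prod fun _ => jf
  calc harmPow ν f g k ≤ ∫ z : Fin k → X, ((∏ i, f (z i) : ℝ≥0) : ℝ) ∂(Measure.pi fun _ => ν) :=
        integral_mono (integrable_harm (by fun_prop) (by fun_prop) i) i
          fun z => harm_le_left (NNReal.coe_nonneg _) (NNReal.coe_nonneg _)
    _ = 1 := by
        simp_rw [NNReal.coe_prod]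
        rw [integral_fintype_prod_eq_pow (fun x => (f x : ℝ)), f1, one_pow]

/-- Solving the two-point comparison for `t`, when the Bayes values drop by `2 * κ / √d` in each
coordinate. -/
lemma le_of_forall_prod_sub_prod_le {d : ℕ} (hd : 1 ≤ d) {A A' : Fin d → ℝ} {κ t : ℝ} (hκ : 0 < κ)
    (A0 : ∀ j, 0 ≤ A' j) (A1 : ∀ j, A j ≤ 1) (gap : ∀ j, A' j ≤ A j - 2 * (κ / √d))
    (h : ∀ B : ℝ, 0 < B → ∏ j, (2 - 1 / (2 * √d) * A' j) - ∏ j, (2 - 1 / (2 * √d) * A j) ≤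
      2 ^ d * (B * t) +
        (∏ j, (2 - 2 * (1 / (2 * √d)) * A' j + 2 * (1 / (2 * √d)) ^ 2)) / (4 * B)) :
    (κ / 2 / (1 + κ / 2)) ^ 2 / 3 ≤ t := by
  have d1 : (1 : ℝ) ≤ d := by exact_mod_cast hd
  have s1 : 1 ≤ √(d : ℝ) := Real.one_le_sqrt.2 d1
  have s2 : √(d : ℝ) ^ 2 = d := Real.sq_sqrt (by linarith)
  set s : ℝ := √(d : ℝ) with hs
  set l : ℝ := 1 / (2 * s) with hl
  have l0 : 0 < l := by positivity
  have l1 : l ≤ 1 / 2 := by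
    rw [hl, div_le_div_iff₀ (by positivity) (by norm_num)]; linarith
  have l2 : 4 * l ^ 2 = 1 / d := by rw [hl, ← s2]; field_simp; norm_num
  have lκ : l * (κ / s) = κ / 2 / d := by rw [hl, ← s2]; field_simp
  have hgap0 : 0 < κ / s := by positivity
  have A'1 (j) : A' j ≤ 1 := by linarith [gap j, A1 j]
  set V := ∏ j, (1 - l * (A j / 2)) with hV
  set S := ∏ j, (1 - l * (A' j / 2)) with hS
  have fS (j) : 0 < 1 - l * (A' j / 2) := by nlinarith [A0 j, A'1 j]
  have fV (j) : 0 < 1 - l * (A j / 2) := by nlinarith [A0 j, A1 j, gap j]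
  have S0 : 0 < S := Finset.prod_pos fun j _ => fS j
  have V0 : 0 < V := Finset.prod_pos fun j _ => fV j
  set δ := κ / 2 with hδ
  have δ0 : 0 < δ := by positivity
  have ratio : (1 + δ) * V ≤ S := by
    have bern : 1 + δ ≤ (1 + δ / d) ^ d := by
      have δd : 0 ≤ δ / d := by positivity
      have := one_add_mul_le_pow (a := δ / d) (by linarith) d
      rwa [mul_div_cancel₀ _ (by positivity)] at this
    calc (1 + δ) * V ≤ (1 + δ / d) ^ d * V := by gcongr
      _ = ∏ j, ((1 + δ / d) * (1 - l * (A j / 2))) := by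
          rw [Finset.prod_mul_distrib, Finset.prod_const, Finset.card_univ, Fintype.card_fin]
      _ ≤ S := Finset.prod_le_prod (fun j _ => mul_nonneg (by positivity) (fV j).le) fun j _ => by
          have h1 := mul_le_mul_of_nonneg_left (gap j) l0.le
          have h2 : 0 ≤ δ / d * (l * (A j / 2)) :=
            mul_nonneg (by positivity) (mul_nonneg l0.le (by linarith [A0 j, gap j]))
          have h3 : l * (A j - 2 * (κ / s)) = l * A j - 2 * (δ / d) := by rw [← lκ]; ring
          linarith
  have e1 (a : Fin d → ℝ) : ∏ j, (2 - l * a j) = 2 ^ d * ∏ j, (1 - l * (a j / 2)) := by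
    have : (2 : ℝ) ^ d = ∏ _j : Fin d, 2 := by simp
    rw [this, ← Finset.prod_mul_distrib]
    exact Finset.prod_congr rfl fun j _ => by ring
  have e2 : ∏ j, (2 - 2 * l * A' j + 2 * l ^ 2) ≤ 2 ^ d * (3 * S ^ 2) := by
    have ed : (1 + 1 / (d : ℝ)) ^ d ≤ 3 := by
      calc (1 + 1 / (d : ℝ)) ^ d ≤ (Real.exp (1 / d)) ^ d := by
            gcongr; linarith [Real.add_one_le_exp (1 / (d : ℝ))]
        _ = Real.exp 1 := by rw [← Real.exp_nat_mul, mul_one_div_cancel (by positivity)]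
        _ ≤ 3 := by linarith [Real.exp_one_lt_d9]
    calc _ ≤ ∏ j, (2 * (1 + 1 / (d : ℝ)) * (1 - l * (A' j / 2)) ^ 2) :=
          Finset.prod_le_prod (fun j _ => by nlinarith [A0 j, A'1 j]) fun j _ => by
            rw [← l2]
            have h0 := A0 j
            have h1 := A'1 j
            have h3 : (3 / 4) ^ 2 ≤ (1 - l * (A' j / 2)) ^ 2 :=
              pow_le_pow_left₀ (by norm_num) (by nlinarith) 2
            nlinarith [mul_nonneg (sq_nonneg l) (sub_nonneg.2 h3),
              sq_nonneg (l * A' j), sq_nonneg l]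
      _ = 2 ^ d * ((1 + 1 / (d : ℝ)) ^ d * S ^ 2) := by
          simp only [Finset.prod_mul_distrib, Finset.prod_const, Finset.card_univ,
            Fintype.card_fin, Finset.prod_pow, hS, mul_assoc]
      _ ≤ _ := by gcongr
  set η := δ / (1 + δ) with hη
  have η0 : 0 < η := by positivity
  have hSV : S * η ≤ S - V := by
    have : S * (1 - η) = S / (1 + δ) := by rw [hη]; field_simp; ring
    have : V ≤ S / (1 + δ) := by rw [le_div_iff₀ (by positivity)]; linarith
    linarith
  have key := h (3 / (2 * η) * S) (by positivity)
  rw [e1, e1] at key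
  have two : (0 : ℝ) < 2 ^ d := by positivity
  have key2 : 2 ^ d * (S - V) ≤ 2 ^ d * (3 / (2 * η) * S * t + η * S / 2) := by
    have := div_le_div_of_nonneg_right e2 (by positivity : 0 ≤ 4 * (3 / (2 * η) * S))
    have e3 : 2 ^ d * (3 * S ^ 2) / (4 * (3 / (2 * η) * S)) = 2 ^ d * (η * S / 2) := by
      field_simp; norm_num
    rw [e3] at this
    linarith
  have key3 : S * η ≤ 3 / (2 * η) * S * t + η * S / 2 :=
    hSV.trans (le_of_mul_le_mul_left key2 two)
  have key4 : S * (η ^ 2) ≤ S * (3 * t) := by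
    have := mul_le_mul_of_nonneg_left key3 (by positivity : 0 ≤ 2 * η)
    have e4 : 2 * η * (3 / (2 * η) * S * t + η * S / 2) = S * (3 * t) + η ^ 2 * S := by
      field_simp
    rw [e4] at this
    linarith
  linarith [le_of_mul_le_mul_left key4 S0]

/-- A real-valued version of the Radon-Nikodym derivative still represents the measure. -/
lemma withDensity_toNNReal_rnDeriv {X : Type*} [MeasurableSpace X] {μ ν : Measure X}
    [SigmaFinite μ] [SigmaFinite ν] (h : μ ≪ ν) :
    μ = ν.withDensity fun x => ((μ.rnDeriv ν x).toNNReal : ℝ≥0∞) := by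
  conv_lhs => rw [← Measure.withDensity_rnDeriv_eq μ ν h]
  refine withDensity_congr_ae ?_
  filter_upwards [Measure.rnDeriv_ne_top μ ν] with x hx
  rw [ENNReal.coe_toNNReal hx]

/-- Squared Hellinger distance of order `1/n` makes `⌈c * n / √d⌉₊` further samples decrease the
harmonic affinity by order `1/√d`. -/
lemma harmPow_ceil_le {X : Type*} [MeasurableSpace X] {ν : Measure X} [SigmaFinite ν]
    {f g : X → ℝ≥0} (hf : Measurable f) (hg : Measurable g)
    (jf : Integrable (fun y => (f y : ℝ)) ν) (jg : Integrable (fun y => (g y : ℝ)) ν)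
    (f1 : ∫ y, (f y : ℝ) ∂ν = 1) (g1 : ∫ y, (g y : ℝ) ∂ν = 1) {c : ℝ} (hc : 0 < c) {n d : ℕ}
    (hn : 1 ≤ n) (hd : 1 ≤ d)
    (lo : 1 / (10 * n) ≤ 1 / 2 * ∫ y, (√(f y : ℝ) - √(g y : ℝ)) ^ 2 ∂ν)
    (hi : 1 / 2 * ∫ y, (√(f y : ℝ) - √(g y : ℝ)) ^ 2 ∂ν ≤ 1 / (5 * n)) :
    harmPow ν f g (n + ⌈c * n / √d⌉₊) ≤
      harmPow ν f g n - 2 * (32 / 625 * (c / 10 / (1 + c / 10)) / √d) := by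
  set m := ⌈c * n / √d⌉₊ with hm
  have n1 : (1 : ℝ) ≤ n := by exact_mod_cast hn
  have s1 : 1 ≤ √(d : ℝ) := Real.one_le_sqrt.2 (by exact_mod_cast hd)
  have e := integral_sq_sqrt_sub_sqrt hf hg jf jg f1 g1
  rw [e] at lo hi
  have ad := harmPow_add_le hf hg jf jg f1 g1 n m
  obtain ⟨x, hx⟩ : ∃ x, ∫ y, √(f y : ℝ) * √(g y : ℝ) ∂ν = 1 - x := ⟨1 - _, by ring⟩
  rw [hx] at lo hi ad
  replace lo : 1 / (10 * n) ≤ x := by linarith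
  replace hi : x ≤ 1 / (5 * n) := by linarith
  have x0 : 0 ≤ x := le_trans (by positivity) lo
  have nx : n * x ≤ 1 / 5 := by
    rw [le_div_iff₀ (by positivity)] at hi
    linarith
  have x1 : x ≤ 1 / 5 := by nlinarith
  have power : 4 / 5 ≤ (1 - x) ^ n := by
    have := one_add_mul_le_pow (a := -x) (by linarith) n
    rw [← sub_eq_add_neg] at this
    linarith
  have mx : c / 10 / √d ≤ m * x := by
    have h1 : c * n / √d ≤ m := Nat.le_ceil _
    calc c / 10 / √d = c * n / √d * (1 / (10 * n)) := by field_simp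
      _ ≤ m * x := by gcongr
  have drop : c / 10 / (1 + c / 10) / √d ≤ 1 - (1 - x) ^ m := by
    have h1 := one_sub_pow_le x0 (by linarith) m
    have h2 : 1 / (1 + m * x) ≤ 1 / (1 + c / 10 / √d) := by gcongr
    have h3 : c / 10 / (1 + c / 10) / √d ≤ 1 - 1 / (1 + c / 10 / √d) := by
      have : 1 - 1 / (1 + c / 10 / √d) = c / 10 / (√d + c / 10) := by field_simp; ring
      rw [this, div_div]
      gcongr
      nlinarith
    linarith
  have e2 : 2 * (32 / 625 * (c / 10 / (1 + c / 10)) / √d) =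
      64 / 625 * (c / 10 / (1 + c / 10) / √d) := by ring
  rw [e2]
  linarith [ad power]

/-- Universal lower bound for product models.
For every `c > 0` there exists `c' > 0` depending only on `c` such that for all
`n, d ≥ 1` and every product model: if each coordinate `j` contains two parameters
with `1/(10n) ≤ H²(p_{θ_{j,+}}, p_{θ_{j,−}}) ≤ 1/(5n)`, then
`ε*(𝒫, n, ⌈cn/√d⌉) ≥ c'`. -/
theorem product_model_universal_lower_bound (c : ℝ) (hc : 0 < c) :
    ∃ c' : ℝ, 0 < c' ∧
      ∀ (n d : ℕ), 1 ≤ n → 1 ≤ d →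
      ∀ (X : Fin d → Type*) [∀ j, MeasurableSpace (X j)]
        (Θ : Fin d → Type*) (p : ∀ j, Θ j → Measure (X j)),
        (∀ j t, IsProbabilityMeasure (p j t)) →
        (∀ j, ∃ θp θm : Θ j,
          1 / (10 * n) ≤ hellingerSq (p j θp) (p j θm) ∧
          hellingerSq (p j θp) (p j θm) ≤ 1 / (5 * n)) →
        c' ≤ ampErr (fun θ : (∀ j, Θ j) => Measure.pi fun j => p j (θ j)) n
              ⌈c * n / Real.sqrt d⌉₊ := by
  set κ : ℝ := 32 / 625 * (c / 10 / (1 + c / 10)) with hκ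
  have κ0 : 0 < κ := by positivity
  refine ⟨(κ / 2 / (1 + κ / 2)) ^ 2 / 3, by positivity, ?_⟩
  intro n d hn hd X _ Θ p hp hpm
  choose θp θm lo hi using hpm
  set m := ⌈c * n / Real.sqrt d⌉₊ with hm
  have : NeZero n := ⟨by omega⟩
  have : Nonempty {T : Kernel (Fin n → ∀ j, X j) (Fin (n + m) → ∀ j, X j) // IsMarkovKernel T} :=
    ⟨⟨Kernel.deterministic (fun x i => x (Fin.ofNat n i)) (by fun_prop), inferInstance⟩⟩
  refine le_ciInf fun ⟨T, hT⟩ => ?_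
  set q : ∀ j, Bool → Measure (X j) := fun j s => p j (if s then θp j else θm j) with hq
  have prob (j s) : IsProbabilityMeasure (q j s) := hp j _
  set ν : ∀ j, Measure (X j) := fun j => q j true + q j false with hν
  set f : ∀ j, Bool → X j → ℝ≥0 := fun j s x => ((q j s).rnDeriv (ν j) x).toNNReal with hf
  have ac (j s) : q j s ≪ ν j := by
    cases s
    · exact (Measure.le_add_left le_rfl).absolutelyContinuous
    · exact (Measure.le_add_right le_rfl).absolutelyContinuous
  have fm (j s) : Measurable (f j s) := (Measure.measurable_rnDeriv _ _).ennreal_toNNReal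
  have fi (j s) : Integrable (fun x => (f j s x : ℝ)) (ν j) := Measure.integrable_toReal_rnDeriv
  have f1 (j s) : ∫ x, (f j s x : ℝ) ∂(ν j) = 1 :=
    (Measure.integral_toReal_rnDeriv (ac j s)).trans (by simp)
  have vertex (θ : Fin d → Bool) :
      tvDist (Measure.pi fun _ : Fin (n + m) => Measure.pi fun j => q j (θ j))
        ((Measure.pi fun _ : Fin n => Measure.pi fun j => q j (θ j)).bind T) ≤
      ⨆ θ : ∀ j, Θ j, tvDist (Measure.pi fun _ : Fin (n + m) => Measure.pi fun j => p j (θ j))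
        ((Measure.pi fun _ : Fin n => Measure.pi fun j => p j (θ j)).bind T) := by
    refine le_ciSup (f := fun θ : ∀ j, Θ j =>
      tvDist (Measure.pi fun _ : Fin (n + m) => Measure.pi fun j => p j (θ j))
        ((Measure.pi fun _ : Fin n => Measure.pi fun j => p j (θ j)).bind T)) ⟨1, ?_⟩
      fun j => if θ j then θp j else θm j
    rintro _ ⟨θ, rfl⟩
    exact tvDist_le_one _ _
  refine le_of_forall_prod_sub_prod_le hd κ0 (fun j => harmPow_nonneg _ _ _ _)
    (fun j => harmPow_le_one (fm j true) (fm j false) (fi j true) (f1 j true) n)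
    (fun j => harmPow_ceil_le (fm j true) (fm j false) (fi j true) (fi j false) (f1 j true)
      (f1 j false) hc hn hd (lo j) (hi j)) fun B hB => ?_
  have s1 : 1 ≤ Real.sqrt (d : ℝ) := Real.one_le_sqrt.2 (by exact_mod_cast hd)
  have core := prod_sub_prod_le ν f fm q (fun j s => withDensity_toNNReal_rnDeriv (ac j s)) fi f1 T
    vertex (l := 1 / (2 * Real.sqrt d)) (by positivity)
    ((div_le_one (by positivity)).2 (by linarith)) hB
  rwa [Fintype.card_fin] at core
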